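/- For all 1 ≤ j < k ≤ n and every x ∈ U ∩ S^n, D_{e_k(x)} e_j(x) = (x_{j−1} / √(s_{j−1}(x) s_j(x))) · e_k(x). (This identifies the only nonvanishing Christoffel symbols of S^n in this frame: Γ^k_{kj} = −Γ^j_{kk} = x_{j−1}/√(s_{j−1} s_j) for j < k.) -/

import Mathlib

open scoped InnerProductSpace BigOperators

noncomputable section

/-- `s_j(x) = ∑_{r=j}^n x_r²`. -/
def sfun (n j : ℕ) (x : EuclideanSpace ℝ (Fin (n + 1))) : ℝ :=
  ∑ r : Fin (n + 1), if j ≤ (r : ℕ) then x r ^ 2 else 0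

/-- The `j`-th coordinate of `x` (read as a natural-number index, `0` out of range). -/
def coordfun (n : ℕ) (x : EuclideanSpace ℝ (Fin (n + 1))) (j : ℕ) : ℝ :=
  if h : j < n + 1 then x ⟨j, h⟩ else 0

/-- The vector field `e_j(x) = √(s_j/s_{j-1}) ( −∂_{j−1} + (x_{j−1}/s_j) Σ_{r=j}^n x_r ∂_r )`. -/
def efun (n j : ℕ) (x : EuclideanSpace ℝ (Fin (n + 1))) : EuclideanSpace ℝ (Fin (n + 1)) :=
  WithLp.toLp 2 fun r => Real.sqrt (sfun n j x / sfun n (j - 1) x) *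
    (-(if (r : ℕ) = j - 1 then 1 else 0)
      + coordfun n x (j - 1) / sfun n j x * (if j ≤ (r : ℕ) then x r else 0))

/-- `U = {x ∈ ℝ^{n+1} : x_n > 0}`. -/
def Usph (n : ℕ) : Set (EuclideanSpace ℝ (Fin (n + 1))) := {x | 0 < coordfun n x n}

/-- The unit sphere `S^n ⊂ ℝ^{n+1}`. -/
def sph (n : ℕ) : Set (EuclideanSpace ℝ (Fin (n + 1))) :=
  {x | ∑ r : Fin (n + 1), x r ^ 2 = 1}

lemma sfun_pos {n j : ℕ} (hj : j ≤ n) {x : EuclideanSpace ℝ (Fin (n + 1))}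
    (hx : x ∈ Usph n) : 0 < sfun n j x := by
  have hx' : 0 < x (Fin.last n) := by
    simpa [Usph, coordfun, Fin.last] using hx
  refine Finset.sum_pos' (fun r _ => by split_ifs <;> positivity)
    ⟨Fin.last n, Finset.mem_univ _, ?_⟩
  simp only [Fin.val_last, hj, if_true]
  positivity

lemma differentiable_euclidean_apply (n : ℕ) (r : Fin (n + 1)) :
    Differentiable ℝ fun x : EuclideanSpace ℝ (Fin (n + 1)) => x r :=
  (EuclideanSpace.proj (𝕜 := ℝ) r).differentiable

lemma differentiable_sfun (n j : ℕ) : Differentiable ℝ (sfun n j) := by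
  unfold sfun
  refine Differentiable.fun_sum fun r _ => ?_
  split_ifs
  · exact (differentiable_euclidean_apply n r).pow 2
  · exact differentiable_const 0

lemma differentiable_coordfun (n j : ℕ) : Differentiable ℝ fun x => coordfun n x j := by
  unfold coordfun
  split_ifs with h
  · exact differentiable_euclidean_apply n ⟨j, h⟩
  · exact differentiable_const 0

lemma differentiableAt_efun {n j : ℕ} (hj : j ≤ n) {x : EuclideanSpace ℝ (Fin (n + 1))}
    (hx : x ∈ Usph n) : DifferentiableAt ℝ (efun n j) x := by
  have hs := sfun_pos hj hx
  have hs' := sfun_pos ((Nat.sub_le j 1).trans hj) hx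
  rw [differentiableAt_euclidean]
  intro r
  have hr : DifferentiableAt ℝ (fun y : EuclideanSpace ℝ (Fin (n + 1)) =>
      if j ≤ (r : ℕ) then y r else 0) x := by
    split_ifs
    · exact differentiable_euclidean_apply n r x
    · exact differentiableAt_const 0
  have hsj := differentiable_sfun n j x
  have hsj' := differentiable_sfun n (j - 1) x
  have hc := differentiable_coordfun n (j - 1) x
  have hsqrt := (hsj.fun_mul (hsj'.fun_inv hs'.ne')).sqrt (mul_pos hs (inv_pos.2 hs')).ne'
  exact hsqrt.fun_mul (((hc.fun_mul (hsj.fun_inv hs.ne')).fun_mul hr).const_add _)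

/-- `e_k` has no component in the directions `∂_r` with `r < k - 1`. -/
lemma efun_apply_eq_zero {n k : ℕ} {r : Fin (n + 1)} (hr : (r : ℕ) + 1 < k)
    (x : EuclideanSpace ℝ (Fin (n + 1))) : efun n k x r = 0 := by
  have h₁ : (r : ℕ) ≠ k - 1 := by omega
  have h₂ : ¬ k ≤ (r : ℕ) := by omega
  simp [efun, h₁, h₂]

/-- `e_k(x)` is orthogonal to `x`. -/
lemma sum_mul_efun {n k : ℕ} (hk : k ≤ n) {x : EuclideanSpace ℝ (Fin (n + 1))}
    (hx : x ∈ Usph n) : ∑ r, x r * efun n k x r = 0 := by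
  have hs := sfun_pos hk hx
  have hlt : k - 1 < n + 1 := by omega
  have h₁ : ∑ r : Fin (n + 1), (if (r : ℕ) = k - 1 then x r else 0) = coordfun n x (k - 1) := by
    rw [Finset.sum_eq_single (⟨k - 1, hlt⟩ : Fin (n + 1))]
    · simp [coordfun, hlt]
    · intro r _ hr
      exact if_neg fun h => hr (Fin.ext h)
    · simp
  have h₂ : ∀ r, x r * efun n k x r = Real.sqrt (sfun n k x / sfun n (k - 1) x) *
      (-(if (r : ℕ) = k - 1 then x r else 0) + coordfun n x (k - 1) / sfun n k x *
        (if k ≤ (r : ℕ) then x r ^ 2 else 0)) := by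
    intro r
    simp only [efun]
    split_ifs <;> ring
  have h₃ : ∑ r : Fin (n + 1), (if k ≤ (r : ℕ) then x r ^ 2 else 0) = sfun n k x := rfl
  rw [Finset.sum_congr rfl fun r _ => h₂ r, ← Finset.mul_sum, Finset.sum_add_distrib,
    Finset.sum_neg_distrib, ← Finset.mul_sum, h₁, h₃, div_mul_cancel₀ _ hs.ne']
  ring

lemma hasDerivAt_line_apply {n : ℕ} (x v : EuclideanSpace ℝ (Fin (n + 1))) (r : Fin (n + 1)) :
    HasDerivAt (fun t : ℝ => (x + t • v) r) (v r) 0 := by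
  simpa using ((hasDerivAt_id (0 : ℝ)).mul_const (v r)).const_add (x r)

/-- `s_i` has vanishing derivative along `e_k` for `i < k`. -/
lemma hasDerivAt_sfun_line {n i k : ℕ} (hik : i < k) (hk : k ≤ n)
    {x : EuclideanSpace ℝ (Fin (n + 1))} (hx : x ∈ Usph n) :
    HasDerivAt (fun t : ℝ => sfun n i (x + t • efun n k x)) 0 0 := by
  have h : HasDerivAt (fun t : ℝ => sfun n i (x + t • efun n k x))
      (∑ r, 2 * (x r * efun n k x r)) 0 := by
    unfold sfun
    refine HasDerivAt.fun_sum fun r _ => ?_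
    split_ifs with hr
    · simpa [mul_assoc] using (hasDerivAt_line_apply x (efun n k x) r).fun_pow 2
    · rw [efun_apply_eq_zero (by omega)]
      simpa using hasDerivAt_const (0 : ℝ) (0 : ℝ)
  rwa [← Finset.mul_sum, sum_mul_efun hk hx, mul_zero] at h

lemma sqrt_div_mul_div {a b : ℝ} (ha : 0 < a) (hb : 0 < b) (c : ℝ) :
    Real.sqrt (a / b) * (c / a) = c / Real.sqrt (b * a) := by
  rw [Real.sqrt_div ha.le, Real.sqrt_mul hb.le]
  have h := Real.sqrt_pos.2 ha
  have h' := Real.sqrt_pos.2 hb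
  field_simp
  rw [Real.sq_sqrt ha.le, mul_comm]

/-- For `1 ≤ j < k ≤ n` and `x ∈ U ∩ S^n`,
`D_{e_k(x)} e_j(x) = (x_{j−1} / √(s_{j−1}(x) s_j(x))) · e_k(x)`. -/
theorem statement4 (n j k : ℕ) (hj : 1 ≤ j) (hjk : j < k) (hk : k ≤ n)
    (x : EuclideanSpace ℝ (Fin (n + 1))) (hxU : x ∈ Usph n) (hxS : x ∈ sph n) :
    fderiv ℝ (efun n j) x (efun n k x)
      = (coordfun n x (j - 1) / Real.sqrt (sfun n (j - 1) x * sfun n j x)) • efun n k x := by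
  have hs := sfun_pos (hjk.le.trans hk) hxU
  have hs' := sfun_pos (show j - 1 ≤ n by omega) hxU
  have hline := (differentiableAt_efun (hjk.le.trans hk) hxU).hasFDerivAt.hasLineDerivAt
    (efun n k x)
  ext r
  have hline_r := (EuclideanSpace.proj (𝕜 := ℝ) r).hasFDerivAt.comp_hasDerivAt 0 hline
  refine hline_r.unique ?_
  have hcoord : ∀ t : ℝ, coordfun n (x + t • efun n k x) (j - 1) = coordfun n x (j - 1) := by
    intro t
    unfold coordfun
    split_ifs with h
    · have h₀ : efun n k x ⟨j - 1, h⟩ = 0 :=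
        efun_apply_eq_zero (show j - 1 + 1 < k by omega) x
      simp [h₀]
    · rfl
  have hr : HasDerivAt (fun t : ℝ => if j ≤ (r : ℕ) then (x + t • efun n k x) r else 0)
      (efun n k x r) 0 := by
    split_ifs with h
    · exact hasDerivAt_line_apply x _ r
    · rw [efun_apply_eq_zero (by omega)]
      exact hasDerivAt_const _ _
  have hsj := hasDerivAt_sfun_line hjk hk hxU
  have hsj' := hasDerivAt_sfun_line (show j - 1 < k by omega) hk hxU
  have hsqrt := (hsj.div hsj' (by simpa using hs'.ne')).sqrt
    (by simpa using (div_pos hs hs').ne')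
  have hquot := (hasDerivAt_const (0 : ℝ) (coordfun n x (j - 1))).div hsj
    (by simpa using hs.ne')
  have hprod := hsqrt.mul ((hquot.mul hr).const_add (-(if (r : ℕ) = j - 1 then (1 : ℝ) else 0)))
  refine (hprod.congr_deriv ?_).congr_of_eventuallyEq (.of_forall fun t => ?_)
  · simp [← sqrt_div_mul_div hs hs', mul_assoc]
  · generalize efun n k x = v at hcoord ⊢
    simp [efun, hcoord]
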